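/- arXiv:2203.08248 — 9 statements merged into one kernel-verified Lean document; each statement's English description precedes it below -/
import Mathlib

section
/- Let α ∈ (0,1), let λ > 0, and let a : ℕ → ℝ satisfy 0 ≤ a i ≤ α^i for all i. Then for every natural number n, the series ∑'_{i : ℕ} a i / (λ + a i) converges and satisfies ∑'_{i} a i / (λ + a i) ≤ n + α^n / (λ·(1 − α)). -/
/-!
For `x ≥ 0` and `c > 0`, the quotient `x / (c + x)` is at most both `1` and `x / c`. Bounding the
first `n` terms by `1` and the others by `a i / c` leaves a geometric tail to sum.
-/

section LinearOrderedField

variable {K : Type*} [Field K] [LinearOrder K] [IsStrictOrderedRing K] {c : K}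

theorem div_add_self_le_div {x : K} (hc : 0 < c) (hx : 0 ≤ x) : x / (c + x) ≤ x / c :=
  div_le_div_of_nonneg_left hx hc (le_add_of_nonneg_right hx)

theorem sum_div_add_self_le_card {ι : Type*} {a : ι → K} {s : Finset ι} (hc : 0 ≤ c)
    (ha : ∀ i ∈ s, 0 ≤ a i) : ∑ i ∈ s, a i / (c + a i) ≤ s.card := by
  simpa only [nsmul_one] using s.sum_le_card_nsmul _ 1 fun i hi =>
    div_le_one_of_le₀ (le_add_of_nonneg_left hc) (add_nonneg hc (ha i hi))

end LinearOrderedField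

section Series

variable {ι : Type*} {a : ι → ℝ} {c : ℝ}

theorem summable_div_add_self (hc : 0 < c) (ha : ∀ i, 0 ≤ a i) (hsum : Summable a) :
    Summable fun i => a i / (c + a i) :=
  (hsum.div_const c).of_nonneg_of_le (fun i => div_nonneg (ha i) (add_nonneg hc.le (ha i)))
    fun i => div_add_self_le_div hc (ha i)

theorem tsum_div_add_self_le_tsum_div (hc : 0 < c) (ha : ∀ i, 0 ≤ a i) (hsum : Summable a) :
    ∑' i, a i / (c + a i) ≤ (∑' i, a i) / c :=
  calc
    ∑' i, a i / (c + a i) ≤ ∑' i, a i / c :=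
      (summable_div_add_self hc ha hsum).tsum_le_tsum
        (fun i => div_add_self_le_div hc (ha i)) (hsum.div_const c)
    _ = (∑' i, a i) / c := tsum_div_const

theorem tsum_div_add_self_le_card_add_tsum_div (hc : 0 < c) (ha : ∀ i, 0 ≤ a i)
    (hsum : Summable a) (s : Finset ι) :
    ∑' i, a i / (c + a i) ≤ s.card + (∑' i : {i // i ∉ s}, a i) / c := by
  rw [← (summable_div_add_self hc ha hsum).sum_add_tsum_subtype_compl s]
  exact add_le_add (sum_div_add_self_le_card hc.le fun i _ => ha i)
    (tsum_div_add_self_le_tsum_div hc (fun i => ha i) (hsum.subtype _))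

end Series

theorem tsum_notMem_range {M : Type*} [AddCommMonoid M] [TopologicalSpace M] (f : ℕ → M) (n : ℕ) :
    ∑' i : {i // i ∉ Finset.range n}, f i = ∑' i, f (i + n) :=
  ((notMemRangeEquiv n).symm.tsum_eq fun i => f i).symm

theorem hasSum_geometric_nat_add {K : Type*} [NormedDivisionRing K] {r : K} (hr : ‖r‖ < 1)
    (n : ℕ) : HasSum (fun i => r ^ (i + n)) (r ^ n / (1 - r)) := by
  simpa only [← pow_add, add_comm, ← div_eq_mul_inv] using
    (hasSum_geometric_of_norm_lt_one hr).mul_left (r ^ n)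

/-- geometric-decay intermediate inequality. -/
theorem stmt_1 (α : ℝ) (hα : α ∈ Set.Ioo (0 : ℝ) 1) (lam : ℝ) (hlam : 0 < lam)
    (a : ℕ → ℝ) (ha : ∀ i, 0 ≤ a i ∧ a i ≤ α ^ i) (n : ℕ) :
    Summable (fun i => a i / (lam + a i)) ∧
      ∑' i, a i / (lam + a i) ≤ (n : ℝ) + α ^ n / (lam * (1 - α)) := by
  obtain ⟨hnonneg, hgeom⟩ := forall_and.mp ha
  have hnorm : ‖α‖ < 1 := (Real.norm_of_nonneg hα.1.le).trans_lt hα.2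
  have hsum : Summable a :=
    (summable_geometric_of_norm_lt_one hnorm).of_nonneg_of_le hnonneg hgeom
  have htail : ∑' i, a (i + n) ≤ α ^ n / (1 - α) :=
    hasSum_le (fun i => hgeom (i + n)) ((summable_nat_add_iff n).2 hsum).hasSum
      (hasSum_geometric_nat_add hnorm n)
  refine ⟨summable_div_add_self hlam hnonneg hsum, ?_⟩
  calc
    ∑' i, a i / (lam + a i) ≤ n + (∑' i, a (i + n)) / lam := by
      simpa only [Finset.card_range, tsum_notMem_range] using
        tsum_div_add_self_le_card_add_tsum_div hlam hnonneg hsum (Finset.range n)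
    _ ≤ n + α ^ n / (1 - α) / lam := by gcongr
    _ = n + α ^ n / (lam * (1 - α)) := by rw [div_div, mul_comm lam]
end

section
/- Let ι be a finite nonempty index type, p : ι → ℝ a probability weight function (p i ≥ 0 for all i and ∑ i, p i = 1), d ≥ 1, u ψ : ι → (Fin d → ℝ), and λ > 0. Let Σ = ∑ j, p j • (outer product of ψ j with itself) and K = trace((Σ + λ·I)⁻¹ * Σ). Then ∑ i, p i * ⟨u i, ψ i⟩ ≤ sqrt(K * ∑ i, ∑ j, p i * p j * ⟨u i, ψ j⟩²) + sqrt(λ * K * ∑ i, p i * ‖u i‖²), where ⟨·,·⟩ and ‖·‖ are the standard inner product and Euclidean norm on Fin d → ℝ. -/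
/-!
For a positive definite matrix `A`, the Cauchy–Schwarz inequality in the inner product of `A`,
applied to `x` and `A⁻¹ y`, reads `⟨x, y⟩² ≤ ⟨x, A x⟩ ⟨y, A⁻¹ y⟩`. A second application of
Cauchy–Schwarz, to the average over `i`, gives `(E⟨u, ψ⟩)² ≤ tr(A⁻¹ Σ) · E⟨u, A u⟩` with
`Σ = E[ψ ψᵀ]`. For `A = Σ + λI` the trace is the effective rank, and `E⟨u, A u⟩` is the decoupled
second moment plus `λ E‖u‖²`.
-/

open Matrix

section CauchySchwarz

variable {n R : Type*} [Fintype n]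

lemma sq_dotProduct_mulVec_le_of_posSemidef [CommRing R] [LinearOrder R] [IsStrictOrderedRing R]
    [StarRing R] [TrivialStar R] {A : Matrix n n R} (hA : A.PosSemidef) (x y : n → R) :
    (x ⬝ᵥ A *ᵥ y) ^ 2 ≤ (x ⬝ᵥ A *ᵥ x) * (y ⬝ᵥ A *ᵥ y) := by
  classical
  have hnonneg (v : n → R) : 0 ≤ A.toBilin' v v := by
    simpa only [toBilin'_apply', star_trivial] using hA.dotProduct_mulVec_nonneg v
  have hsymm : A.toBilin'.IsSymm :=
    isSymm_toBilin'_iff_isSymm.mpr (isHermitian_iff_isSymm.mp hA.isHermitian)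
  simpa only [toBilin'_apply'] using A.toBilin'.apply_sq_le_of_symm hnonneg ⟨hsymm.eq⟩ x y

lemma sq_dotProduct_le_of_posDef [DecidableEq n] [Field R] [LinearOrder R]
    [IsStrictOrderedRing R] [StarRing R] [TrivialStar R] {A : Matrix n n R} (hA : A.PosDef)
    (x y : n → R) :
    (x ⬝ᵥ y) ^ 2 ≤ (x ⬝ᵥ A *ᵥ x) * (y ⬝ᵥ A⁻¹ *ᵥ y) := by
  have hcancel : A *ᵥ (A⁻¹ *ᵥ y) = y := by
    rw [mulVec_mulVec, mul_nonsing_inv A ((isUnit_iff_isUnit_det A).mp hA.isUnit), one_mulVec]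
  have hcs := sq_dotProduct_mulVec_le_of_posSemidef hA.posSemidef x (A⁻¹ *ᵥ y)
  rwa [hcancel, dotProduct_comm (A⁻¹ *ᵥ y) y] at hcs

end CauchySchwarz

section SecondMoment

variable {ι n R : Type*} [Fintype ι]

/-- The matrix `Σ = E[ψ ψᵀ]` of uncentered second moments of the vectors `ψ j` with weights `p j`;
the sum is not divided by the total weight. -/
def secondMomentMatrix [CommSemiring R] (p : ι → R) (ψ : ι → n → R) : Matrix n n R :=
  ∑ j, p j • vecMulVec (ψ j) (ψ j)

lemma posSemidef_secondMomentMatrix [Finite n] [CommRing R] [PartialOrder R] [StarRing R]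
    [StarOrderedRing R] [TrivialStar R] {p : ι → R} (hp : ∀ j, 0 ≤ p j) (ψ : ι → n → R) :
    (secondMomentMatrix p ψ).PosSemidef := by
  refine posSemidef_sum _ fun j _ => PosSemidef.smul ?_ (hp j)
  simpa only [star_trivial] using posSemidef_vecMulVec_self_star (ψ j)

variable [Fintype n]

lemma dotProduct_secondMomentMatrix_mulVec [CommSemiring R] (p : ι → R) (ψ : ι → n → R)
    (v : n → R) :
    v ⬝ᵥ secondMomentMatrix p ψ *ᵥ v = ∑ j, p j * (v ⬝ᵥ ψ j) ^ 2 := by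
  simp only [secondMomentMatrix, sum_mulVec, dotProduct_sum, smul_mulVec, dotProduct_smul,
    vecMulVec_mulVec, op_smul_eq_smul, smul_eq_mul, dotProduct_comm _ v, sq]

lemma trace_mul_secondMomentMatrix [CommSemiring R] (B : Matrix n n R) (p : ι → R)
    (ψ : ι → n → R) :
    trace (B * secondMomentMatrix p ψ) = ∑ j, p j * (ψ j ⬝ᵥ B *ᵥ ψ j) := by
  simp only [secondMomentMatrix, Matrix.mul_sum, trace_sum, Matrix.mul_smul, trace_smul,
    mul_vecMulVec, trace_vecMulVec, smul_eq_mul, dotProduct_comm (B *ᵥ _)]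

lemma sq_sum_mul_dotProduct_le_trace_mul [DecidableEq n] [Field R] [LinearOrder R]
    [IsStrictOrderedRing R] [StarRing R] [TrivialStar R] {A : Matrix n n R} (hA : A.PosDef)
    {p : ι → R} (hp : ∀ i, 0 ≤ p i) (u ψ : ι → n → R) :
    (∑ i, p i * (u i ⬝ᵥ ψ i)) ^ 2 ≤
      trace (A⁻¹ * secondMomentMatrix p ψ) * ∑ i, p i * (u i ⬝ᵥ A *ᵥ u i) := by
  have hform {M : Matrix n n R} (hM : M.PosDef) (v : n → R) : 0 ≤ v ⬝ᵥ M *ᵥ v := by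
    simpa only [star_trivial] using hM.posSemidef.dotProduct_mulVec_nonneg v
  rw [trace_mul_secondMomentMatrix]
  refine Finset.sum_sq_le_sum_mul_sum_of_sq_le_mul _
    (fun i _ => mul_nonneg (hp i) (hform hA.inv _)) (fun i _ => mul_nonneg (hp i) (hform hA _))
    fun i _ => ?_
  calc (p i * (u i ⬝ᵥ ψ i)) ^ 2 = p i ^ 2 * (u i ⬝ᵥ ψ i) ^ 2 := mul_pow _ _ _
    _ ≤ p i ^ 2 * ((u i ⬝ᵥ A *ᵥ u i) * (ψ i ⬝ᵥ A⁻¹ *ᵥ ψ i)) :=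
      mul_le_mul_of_nonneg_left (sq_dotProduct_le_of_posDef hA _ _) (sq_nonneg _)
    _ = p i * (ψ i ⬝ᵥ A⁻¹ *ᵥ ψ i) * (p i * (u i ⬝ᵥ A *ᵥ u i)) := by ring

lemma sum_mul_dotProduct_secondMomentMatrix_add_smul_one_mulVec [DecidableEq n] [CommSemiring R]
    (p : ι → R) (u ψ : ι → n → R) (lam : R) :
    ∑ i, p i * (u i ⬝ᵥ (secondMomentMatrix p ψ + lam • 1) *ᵥ u i) =
      ∑ i, ∑ j, p i * p j * (u i ⬝ᵥ ψ j) ^ 2 + lam * ∑ i, p i * (u i ⬝ᵥ u i) := by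
  simp only [add_mulVec, smul_mulVec, one_mulVec, dotProduct_add, dotProduct_smul, smul_eq_mul,
    dotProduct_secondMomentMatrix_mulVec, mul_add, Finset.sum_add_distrib, Finset.mul_sum,
    mul_assoc, mul_left_comm lam]

end SecondMoment

/-- The effective rank `tr((S + λI)⁻¹ S)` of `S` at regularization level `λ`. It is meaningful only
when `S + λI` is invertible; otherwise the matrix inverse is `0` by convention, and so is the
effective rank. -/
noncomputable def effectiveRank {n R : Type*} [Fintype n] [DecidableEq n] [CommRing R]
    (S : Matrix n n R) (lam : R) : R :=
  trace ((S + lam • (1 : Matrix n n R))⁻¹ * S)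

lemma sqrt_add_le_sqrt_add_sqrt (x y : ℝ) : √(x + y) ≤ √x + √y := by
  refine Real.sqrt_le_iff.mpr ⟨by positivity, ?_⟩
  calc x + y ≤ √x ^ 2 + √y ^ 2 := by
        rw [Real.sq_sqrt', Real.sq_sqrt']
        exact add_le_add (le_max_left x 0) (le_max_left y 0)
    _ ≤ (√x + √y) ^ 2 :=
      pow_add_pow_le (Real.sqrt_nonneg x) (Real.sqrt_nonneg y) two_ne_zero

theorem stmt_7_general {ι n : Type*} [Fintype ι] [Fintype n] [DecidableEq n] {p : ι → ℝ}
    (hp : ∀ i, 0 ≤ p i) (u ψ : ι → n → ℝ) {lam : ℝ} (hlam : 0 < lam) :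
    |∑ i, p i * (u i ⬝ᵥ ψ i)| ≤
      √(effectiveRank (secondMomentMatrix p ψ) lam * ∑ i, ∑ j, p i * p j * (u i ⬝ᵥ ψ j) ^ 2) +
        √(lam * effectiveRank (secondMomentMatrix p ψ) lam * ∑ i, p i * (u i ⬝ᵥ u i)) := by
  have hA : (secondMomentMatrix p ψ + lam • (1 : Matrix n n ℝ)).PosDef :=
    PosDef.posSemidef_add (posSemidef_secondMomentMatrix hp ψ) (PosDef.one.smul hlam)
  have hsq := sq_sum_mul_dotProduct_le_trace_mul hA hp u ψ
  rw [sum_mul_dotProduct_secondMomentMatrix_add_smul_one_mulVec, ← effectiveRank, mul_add,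
    ← mul_assoc, mul_comm _ lam] at hsq
  exact (Real.abs_le_sqrt hsq).trans (sqrt_add_le_sqrt_add_sqrt _ _)

/-- Bellman-rank decoupling (finite dimensional content of Lemma E.1). -/
theorem stmt_7 {ι : Type*} [Fintype ι] [Nonempty ι]
    (p : ι → ℝ) (hp0 : ∀ i, 0 ≤ p i) (hp1 : ∑ i, p i = 1)
    (d : ℕ) (hd : 1 ≤ d) (u ψ : ι → Fin d → ℝ) (lam : ℝ) (hlam : 0 < lam)
    (S : Matrix (Fin d) (Fin d) ℝ)
    (hS : S = ∑ j, p j • Matrix.vecMulVec (ψ j) (ψ j))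
    (K : ℝ)
    (hK : K = Matrix.trace ((S + lam • (1 : Matrix (Fin d) (Fin d) ℝ))⁻¹ * S)) :
    ∑ i, p i * ∑ k, u i k * ψ i k ≤
      Real.sqrt (K * ∑ i, ∑ j, p i * p j * (∑ k, u i k * ψ j k) ^ 2) +
        Real.sqrt (lam * K * ∑ i, p i * ∑ k, u i k ^ 2) := by
  subst hK hS
  simpa only [dotProduct, ← sq, effectiveRank, secondMomentMatrix] using
    (le_abs_self _).trans (stmt_7_general hp0 u ψ hlam)
end

section
/- Let ι be a finite nonempty index type, p : ι → ℝ a probability weight function (p i ≥ 0 for all i and ∑ i, p i = 1), d ≥ 1, w φ : ι → (Fin d → ℝ), and λ > 0. Let Σ = ∑ j, p j • (outer product of φ j with itself) and K = trace((Σ + λ·I)⁻¹ * Σ). Then ∑ i, p i * |⟨w i, φ i⟩| ≤ sqrt((∑ i, ∑ j, p i * p j * ⟨w i, φ j⟩² + λ * ∑ i, p i * ‖w i‖²) * K), where ⟨·,·⟩ and ‖·‖ are the standard inner product and Euclidean norm on Fin d → ℝ. -/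
/-!
The ridge matrix `A = Σ + λI` is positive definite. For each `i`, the Cauchy–Schwarz inequality
for the inner product defined by `A`, applied to `w i` and `A⁻¹ φ i`, gives
`|⟨w i, φ i⟩|² ≤ (w iᴴ A w i) (φ iᴴ A⁻¹ φ i)`; a second Cauchy–Schwarz inequality, for the weights
`p`, averages these bounds. The average of `w iᴴ A w i` expands into the double sum plus the ridge
term, and that of `φ iᴴ A⁻¹ φ i` is `tr (A⁻¹ Σ)` because the trace is linear and cyclic.
-/

section RidgeDecoupling

open Matrix RCLike
open scoped ComplexOrder

variable {ι n 𝕜 : Type*} [RCLike 𝕜]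

/-- The weighted second-moment (uncentred covariance) matrix `∑ p j φ j (φ j)ᴴ` of the vectors
`φ j`, written `Σ` in the paper; it represents `x ↦ ∑ p j * ‖⟨x, φ j⟩‖ ^ 2` as a Hermitian form. -/
def secondMoment (s : Finset ι) (p : ι → ℝ) (φ : ι → n → 𝕜) : Matrix n n 𝕜 :=
  ∑ j ∈ s, p j • vecMulVec (φ j) (star (φ j))

lemma posSemidef_secondMoment [Finite n] {s : Finset ι} {p : ι → ℝ} (hp : ∀ i ∈ s, 0 ≤ p i)
    (φ : ι → n → 𝕜) : (secondMoment s p φ).PosSemidef :=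
  posSemidef_sum s fun j hj => (posSemidef_vecMulVec_self_star (φ j)).smul (hp j hj)

variable [Fintype n]

lemma norm_sq_dotProduct_mulVec_le_of_posSemidef {A : Matrix n n 𝕜} (hA : A.PosSemidef)
    (x y : n → 𝕜) :
    ‖star x ⬝ᵥ A *ᵥ y‖ ^ 2 ≤ re (star x ⬝ᵥ A *ᵥ x) * re (star y ⬝ᵥ A *ᵥ y) := by
  let := A.toSeminormedAddCommGroup hA
  let := A.toInnerProductSpace hA
  have inner_eq (u v : n → 𝕜) : inner 𝕜 u v = star u ⬝ᵥ A *ᵥ v := dotProduct_comm _ _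
  have h := inner_mul_inner_self_le (𝕜 := 𝕜) x y
  rwa [norm_inner_symm y x, ← sq, inner_eq, inner_eq, inner_eq] at h

lemma norm_sq_dotProduct_le_of_posDef [DecidableEq n] {A : Matrix n n 𝕜} (hA : A.PosDef)
    (x y : n → 𝕜) :
    ‖star x ⬝ᵥ y‖ ^ 2 ≤ re (star x ⬝ᵥ A *ᵥ x) * re (star y ⬝ᵥ A⁻¹ *ᵥ y) := by
  have mulVec_inv : A *ᵥ A⁻¹ *ᵥ y = y := by
    rw [mulVec_mulVec, mul_nonsing_inv _ ((isUnit_iff_isUnit_det A).1 hA.isUnit), one_mulVec]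
  have dual_form : star (A⁻¹ *ᵥ y) ⬝ᵥ y = star y ⬝ᵥ A⁻¹ *ᵥ y := by
    rw [star_mulVec, hA.inv.isHermitian.eq, dotProduct_mulVec]
  simpa only [mulVec_inv, dual_form] using
    norm_sq_dotProduct_mulVec_le_of_posSemidef hA.posSemidef x (A⁻¹ *ᵥ y)

lemma sum_mul_norm_dotProduct_le_sqrt_of_posDef [DecidableEq n] {A : Matrix n n 𝕜} (hA : A.PosDef)
    {s : Finset ι} {p : ι → ℝ} (hp : ∀ i ∈ s, 0 ≤ p i) (w φ : ι → n → 𝕜) :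
    ∑ i ∈ s, p i * ‖star (w i) ⬝ᵥ φ i‖ ≤
      √((∑ i ∈ s, p i * re (star (w i) ⬝ᵥ A *ᵥ w i)) *
        ∑ i ∈ s, p i * re (star (φ i) ⬝ᵥ A⁻¹ *ᵥ φ i)) := by
  refine Real.le_sqrt_of_sq_le (Finset.sum_sq_le_sum_mul_sum_of_sq_le_mul s
    (fun i hi => mul_nonneg (hp i hi) (hA.posSemidef.re_dotProduct_nonneg _))
    (fun i hi => mul_nonneg (hp i hi) (hA.inv.posSemidef.re_dotProduct_nonneg _))
    fun i _ => ?_)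
  calc (p i * ‖star (w i) ⬝ᵥ φ i‖) ^ 2 = p i ^ 2 * ‖star (w i) ⬝ᵥ φ i‖ ^ 2 := mul_pow _ _ _
    _ ≤ p i ^ 2 * (re (star (w i) ⬝ᵥ A *ᵥ w i) * re (star (φ i) ⬝ᵥ A⁻¹ *ᵥ φ i)) := by
      gcongr
      exact norm_sq_dotProduct_le_of_posDef hA (w i) (φ i)
    _ = p i * re (star (w i) ⬝ᵥ A *ᵥ w i) * (p i * re (star (φ i) ⬝ᵥ A⁻¹ *ᵥ φ i)) := by ring

lemma re_dotProduct_secondMoment_mulVec (s : Finset ι) (p : ι → ℝ) (φ : ι → n → 𝕜) (x : n → 𝕜) :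
    re (star x ⬝ᵥ secondMoment s p φ *ᵥ x) = ∑ j ∈ s, p j * ‖star x ⬝ᵥ φ j‖ ^ 2 := by
  have rank_one (j : ι) :
      re (star x ⬝ᵥ vecMulVec (φ j) (star (φ j)) *ᵥ x) = ‖star x ⬝ᵥ φ j‖ ^ 2 := by
    rw [vecMulVec_mulVec, op_smul_eq_smul, dotProduct_smul, smul_eq_mul, mul_comm,
      star_dotProduct (φ j), star_def, RCLike.mul_conj, ← ofReal_pow, ofReal_re]
  simp only [secondMoment, sum_mulVec, smul_mulVec, dotProduct_sum, dotProduct_smul, map_sum,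
    smul_re, rank_one]

lemma re_trace_mul_secondMoment (B : Matrix n n 𝕜) (s : Finset ι) (p : ι → ℝ) (φ : ι → n → 𝕜) :
    re (trace (B * secondMoment s p φ)) = ∑ i ∈ s, p i * re (star (φ i) ⬝ᵥ B *ᵥ φ i) := by
  simp only [secondMoment, Finset.mul_sum, Matrix.mul_smul, mul_vecMulVec, trace_sum, trace_smul,
    trace_vecMulVec, dotProduct_comm _ (star _), map_sum, smul_re]

lemma re_dotProduct_add_smul_one_mulVec [DecidableEq n] (A : Matrix n n 𝕜) (c : ℝ) (x : n → 𝕜) :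
    re (star x ⬝ᵥ (A + c • (1 : Matrix n n 𝕜)) *ᵥ x) =
      re (star x ⬝ᵥ A *ᵥ x) + c * ∑ k, ‖x k‖ ^ 2 := by
  have norm_form : re (star x ⬝ᵥ x) = ∑ k, ‖x k‖ ^ 2 := by
    simp only [dotProduct, Pi.star_apply, star_def, RCLike.conj_mul, map_sum, ← ofReal_pow,
      ofReal_re]
  rw [add_mulVec, smul_mulVec, one_mulVec, dotProduct_add, dotProduct_smul, map_add, smul_re,
    norm_form]

theorem stmt_8_general [DecidableEq n] (s : Finset ι) {p : ι → ℝ} (hp : ∀ i ∈ s, 0 ≤ p i)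
    (w φ : ι → n → 𝕜) {lam : ℝ} (hlam : 0 < lam) :
    ∑ i ∈ s, p i * ‖star (w i) ⬝ᵥ φ i‖ ≤
      √((∑ i ∈ s, ∑ j ∈ s, p i * p j * ‖star (w i) ⬝ᵥ φ j‖ ^ 2 +
          lam * ∑ i ∈ s, p i * ∑ k, ‖w i k‖ ^ 2) *
        re (trace ((secondMoment s p φ + lam • (1 : Matrix n n 𝕜))⁻¹ * secondMoment s p φ))) := by
  have ridge_posDef : (secondMoment s p φ + lam • (1 : Matrix n n 𝕜)).PosDef :=
    PosDef.posSemidef_add (posSemidef_secondMoment hp φ) (PosDef.one.smul hlam)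
  convert sum_mul_norm_dotProduct_le_sqrt_of_posDef ridge_posDef hp w φ using 3
  · simp only [re_dotProduct_add_smul_one_mulVec, re_dotProduct_secondMoment_mulVec, mul_add,
      Finset.sum_add_distrib, Finset.mul_sum, mul_assoc, mul_left_comm lam]
  · exact re_trace_mul_secondMoment _ s p φ

end RidgeDecoupling

/-- core Cauchy–Schwarz step of Lemma E.2 (Linear Embedding Decoupling). -/
theorem stmt_8 {ι : Type*} [Fintype ι] [Nonempty ι]
    (p : ι → ℝ) (hp0 : ∀ i, 0 ≤ p i) (hp1 : ∑ i, p i = 1)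
    (d : ℕ) (hd : 1 ≤ d) (w φ : ι → Fin d → ℝ) (lam : ℝ) (hlam : 0 < lam)
    (S : Matrix (Fin d) (Fin d) ℝ)
    (hS : S = ∑ j, p j • Matrix.vecMulVec (φ j) (φ j))
    (K : ℝ)
    (hK : K = Matrix.trace ((S + lam • (1 : Matrix (Fin d) (Fin d) ℝ))⁻¹ * S)) :
    ∑ i, p i * |∑ k, w i k * φ i k| ≤
      Real.sqrt ((∑ i, ∑ j, p i * p j * (∑ k, w i k * φ j k) ^ 2 +
          lam * ∑ i, p i * ∑ k, w i k ^ 2) * K) := by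
  subst hK hS
  simpa [dotProduct, secondMoment] using
    stmt_8_general Finset.univ (fun i _ => hp0 i) w φ hlam
end

section
/- Let ι be a finite nonempty index type, ρ : ι → ℝ a probability weight function (ρ a ≥ 0 for all a and ∑ a, ρ a = 1), d ≥ 1, φ : ι → (Fin d → ℝ), and D ≥ 0. Let Σ = ∑ a, ρ a • (outer product of φ a with itself), and assume Σ is positive definite and that φ a ᵀ Σ⁻¹ (φ a) ≤ D for all a ∈ ι. Then for every w : Fin d → ℝ and every a ∈ ι, ⟨w, φ a⟩² ≤ D * ∑ a', ρ a' * ⟨w, φ a'⟩². -/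
/-!
The prediction `⟨w, x⟩` equals `wᵀ S (S⁻¹ x)`, so the Cauchy–Schwarz inequality for the form `S`
bounds its square by `(wᵀ S w) (xᵀ S⁻¹ x)`. For a design matrix `S` the first factor is the
weighted sum of squared predictions, and the second is the leverage score of `x`.
-/

section DesignMatrix

open Matrix

variable {ι n R : Type*}

/-- The second-moment matrix `Σ = ∑ a, ρ a • φ a (φ a)ᵀ` of the feature vectors `φ a` under
the design `ρ`, encoded as an arbitrary weight function. -/
def designMatrix [Fintype ι] [CommSemiring R] (ρ : ι → R) (φ : ι → n → R) : Matrix n n R :=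
  ∑ a, ρ a • vecMulVec (φ a) (φ a)

theorem isSymm_designMatrix [Fintype ι] [CommSemiring R] (ρ : ι → R) (φ : ι → n → R) :
    (designMatrix ρ φ).IsSymm := by
  simp only [IsSymm, designMatrix, transpose_sum, transpose_smul, transpose_vecMulVec]

variable [Fintype n]

section CauchySchwarz

variable [CommRing R] [LinearOrder R] [IsStrictOrderedRing R] {S : Matrix n n R}

theorem sq_dotProduct_mulVec_le (hS : S.IsSymm) (hS0 : ∀ v, 0 ≤ v ⬝ᵥ S *ᵥ v) (x y : n → R) :
    (x ⬝ᵥ S *ᵥ y) ^ 2 ≤ (x ⬝ᵥ S *ᵥ x) * (y ⬝ᵥ S *ᵥ y) := by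
  classical
  have hsymm : LinearMap.IsSymm (toBilin' S) :=
    LinearMap.BilinForm.isSymm_iff.mp (isSymm_toBilin'_iff_isSymm.mpr hS)
  have hnonneg : ∀ v, 0 ≤ toBilin' S v v := by simpa only [toBilin'_apply'] using hS0
  simpa only [toBilin'_apply'] using (toBilin' S).apply_sq_le_of_symm hnonneg hsymm x y

theorem sq_dotProduct_le_mul_dotProduct_inv_mulVec [DecidableEq n] (hS : S.IsSymm)
    (hS0 : ∀ v, 0 ≤ v ⬝ᵥ S *ᵥ v) (hdet : IsUnit S.det) (x y : n → R) :
    (x ⬝ᵥ y) ^ 2 ≤ (x ⬝ᵥ S *ᵥ x) * (y ⬝ᵥ S⁻¹ *ᵥ y) := by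
  have hy : S *ᵥ (S⁻¹ *ᵥ y) = y := by
    rw [mulVec_mulVec, mul_nonsing_inv S hdet, one_mulVec]
  simpa only [hy, dotProduct_comm (S⁻¹ *ᵥ y) y] using
    sq_dotProduct_mulVec_le hS hS0 x (S⁻¹ *ᵥ y)

end CauchySchwarz

variable [Fintype ι]

theorem dotProduct_designMatrix_mulVec_self [CommSemiring R] (ρ : ι → R) (φ : ι → n → R)
    (w : n → R) :
    w ⬝ᵥ designMatrix ρ φ *ᵥ w = ∑ a, ρ a * (w ⬝ᵥ φ a) ^ 2 := by
  rw [designMatrix, sum_mulVec, dotProduct_sum]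
  refine Finset.sum_congr rfl fun a _ => ?_
  rw [smul_mulVec, vecMulVec_mulVec, dotProduct_smul, op_smul_eq_smul, dotProduct_smul,
    dotProduct_comm (φ a) w, smul_eq_mul, smul_eq_mul, sq]

variable [CommRing R] [LinearOrder R] [IsStrictOrderedRing R]

theorem dotProduct_designMatrix_mulVec_self_nonneg {ρ : ι → R} (hρ : ∀ a, 0 ≤ ρ a)
    (φ : ι → n → R) (w : n → R) : 0 ≤ w ⬝ᵥ designMatrix ρ φ *ᵥ w := by
  rw [dotProduct_designMatrix_mulVec_self]
  exact Finset.sum_nonneg fun a _ => mul_nonneg (hρ a) (sq_nonneg _)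

theorem stmt_10_general [DecidableEq n] {ρ : ι → R} (hρ : ∀ a, 0 ≤ ρ a) {φ : ι → n → R}
    (hdet : IsUnit (designMatrix ρ φ).det) {x : n → R} {D : R}
    (hlev : x ⬝ᵥ (designMatrix ρ φ)⁻¹ *ᵥ x ≤ D) (w : n → R) :
    (w ⬝ᵥ x) ^ 2 ≤ D * ∑ a, ρ a * (w ⬝ᵥ φ a) ^ 2 := by
  have hnonneg := dotProduct_designMatrix_mulVec_self_nonneg hρ φ
  calc
    (w ⬝ᵥ x) ^ 2
      ≤ (w ⬝ᵥ designMatrix ρ φ *ᵥ w) * (x ⬝ᵥ (designMatrix ρ φ)⁻¹ *ᵥ x) :=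
        sq_dotProduct_le_mul_dotProduct_inv_mulVec (isSymm_designMatrix ρ φ) hnonneg hdet w x
    _ ≤ (w ⬝ᵥ designMatrix ρ φ *ᵥ w) * D := mul_le_mul_of_nonneg_left hlev (hnonneg w)
    _ = D * ∑ a, ρ a * (w ⬝ᵥ φ a) ^ 2 := by rw [dotProduct_designMatrix_mulVec_self, mul_comm]

end DesignMatrix

/-- Lemma I.1 of the paper (Design based decoupling). -/
theorem stmt_10 {ι : Type*} [Fintype ι] [Nonempty ι]
    (ρ : ι → ℝ) (hρ0 : ∀ a, 0 ≤ ρ a) (hρ1 : ∑ a, ρ a = 1)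
    (d : ℕ) (hd : 1 ≤ d) (φ : ι → Fin d → ℝ) (D : ℝ) (hD : 0 ≤ D)
    (S : Matrix (Fin d) (Fin d) ℝ)
    (hS : S = ∑ a, ρ a • Matrix.vecMulVec (φ a) (φ a))
    (hSpd : S.PosDef)
    (hlev : ∀ a, ∑ j, ∑ k, φ a j * S⁻¹ j k * φ a k ≤ D)
    (w : Fin d → ℝ) (a : ι) :
    (∑ k, w k * φ a k) ^ 2 ≤ D * ∑ a', ρ a' * (∑ k, w k * φ a' k) ^ 2 := by
  obtain rfl : S = designMatrix ρ φ := hS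
  exact stmt_10_general hρ0 hSpd.det_pos.ne'.isUnit
    (by simpa only [dotProduct, Matrix.mulVec, Finset.mul_sum, mul_assoc] using hlev a) w
end

section
/- Fix N ≥ 1. Define f⋆ : Fin N → Fin 2 → ℝ by f⋆ x 0 = 0 and f⋆ x 1 = 1/2; for each i : Fin N define f_i : Fin N → Fin 2 → ℝ by f_i x a = 1 if (x = i and a = 0) and f_i x a = f⋆ x a otherwise; and for each j : Fin N define the greedy policy π_j : Fin N → Fin 2 by π_j x = 0 if x = j and π_j x = 1 otherwise. Let M : Matrix (Fin N) (Fin N) ℝ be the Bellman-error matrix M i j = (1/N) * ∑_{x : Fin N} (f_i x (π_j x) − f⋆ x (π_j x)). Then M i j = (1/N) if i = j and M i j = 0 otherwise (i.e., M = (1/N) • identity), and the rank of M equals N. -/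
/-! Every candidate is wrong at a single context-action pair, and its average Bellman error under a
policy sees that mistake only if the policy plays the misjudged action at that very context.
When policy `j` plays the misjudged action precisely at context `j`, distinct candidates and
policies therefore never interact: the matrix of Bellman errors is diagonal, and its rank counts
the contexts of nonzero weight at which the mistake is nonzero. -/

open Matrix

section BellmanError

variable {X A R : Type*} [Fintype X]

/-- The Q-type average Bellman error `𝔼_{x ∼ w} [f x (π x) - r x (π x)]` of a value function `f`
under a policy `π`, in a contextual bandit with mean reward `r` and finitely many contexts. The
context distribution is encoded by its weights `w`, which need not be normalized. -/
def avgBellmanError [Ring R] (w : X → R) (r f : X → A → R) (π : X → A) : R :=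
  ∑ x, w x * (f x (π x) - r x (π x))

/-- The matrix whose rank is the Q-type Bellman rank: its rows are indexed by value functions and
its columns by policies. -/
def bellmanErrorMatrix {ι κ : Type*} [Ring R] (w : X → R) (r : X → A → R) (f : ι → X → A → R)
    (π : κ → X → A) : Matrix ι κ R :=
  Matrix.of fun i j => avgBellmanError w r (f i) (π j)

theorem avgBellmanError_eq_single [Ring R] {w : X → R} {r f : X → A → R} {π : X → A} (x₀ : X)
    (hf : ∀ x ≠ x₀, f x (π x) = r x (π x)) :
    avgBellmanError w r f π = w x₀ * (f x₀ (π x₀) - r x₀ (π x₀)) :=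
  Fintype.sum_eq_single x₀ fun x hx => by rw [hf x hx, sub_self, mul_zero]

variable [DecidableEq X]

theorem bellmanErrorMatrix_eq_diagonal [Ring R] {w : X → R} {r : X → A → R} {f : X → X → A → R}
    {π : X → X → A} {a₀ : X → A} (hf : ∀ i x a, ¬(x = i ∧ a = a₀ i) → f i x a = r x a)
    (hπ : ∀ j x, π j x = a₀ x ↔ x = j) :
    bellmanErrorMatrix w r f π = diagonal fun i => w i * (f i i (a₀ i) - r i (a₀ i)) := by
  ext i j
  have hsingle : bellmanErrorMatrix w r f π i j = w i * (f i i (π j i) - r i (π j i)) :=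
    avgBellmanError_eq_single i fun x hx => hf i x _ fun h => hx h.1
  rw [hsingle]
  rcases eq_or_ne i j with rfl | hij
  · rw [diagonal_apply_eq, (hπ i i).2 rfl]
  · have hplay : π j i ≠ a₀ i := fun h => hij ((hπ j i).1 h)
    rw [diagonal_apply_ne _ hij, hf i i _ fun h => hplay h.2, sub_self, mul_zero]

theorem stmt_11_general {K : Type*} [Field K] [DecidableEq K] (w : X → K) (r : X → A → K)
    (f : X → X → A → K) (π : X → X → A) (a₀ : X → A)
    (hf : ∀ i x a, ¬(x = i ∧ a = a₀ i) → f i x a = r x a)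
    (hπ : ∀ j x, π j x = a₀ x ↔ x = j) :
    bellmanErrorMatrix w r f π = diagonal (fun i => w i * (f i i (a₀ i) - r i (a₀ i))) ∧
      (bellmanErrorMatrix w r f π).rank =
        Fintype.card {i // w i * (f i i (a₀ i) - r i (a₀ i)) ≠ 0} := by
  have hdiag := bellmanErrorMatrix_eq_diagonal (w := w) hf hπ
  exact ⟨hdiag, by rw [hdiag, rank_diagonal]⟩

end BellmanError

/-- Q-type Bellman rank lower-bound construction (Appendix B). -/
theorem stmt_11 (N : ℕ) (hN : 1 ≤ N)
    (fstar : Fin N → Fin 2 → ℝ)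
    (hfstar : ∀ x : Fin N, fstar x 0 = 0 ∧ fstar x 1 = 1 / 2)
    (f : Fin N → Fin N → Fin 2 → ℝ)
    (hf : ∀ (i x : Fin N) (a : Fin 2),
      f i x a = if x = i ∧ a = 0 then 1 else fstar x a)
    (π : Fin N → Fin N → Fin 2)
    (hπ : ∀ j x : Fin N, π j x = if x = j then 0 else 1)
    (M : Matrix (Fin N) (Fin N) ℝ)
    (hM : ∀ i j : Fin N,
      M i j = (1 / (N : ℝ)) * ∑ x : Fin N, (f i x (π j x) - fstar x (π j x))) :
    (∀ i j : Fin N, M i j = if i = j then (1 / (N : ℝ)) else 0) ∧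
      M = (1 / (N : ℝ)) • (1 : Matrix (Fin N) (Fin N) ℝ) ∧
      M.rank = N := by
  have hM_eq : M = bellmanErrorMatrix (fun _ => 1 / (N : ℝ)) fstar f π :=
    Matrix.ext fun i j => (hM i j).trans (Finset.mul_sum ..)
  have hgap (i : Fin N) : f i i 0 - fstar i 0 = 1 := by simp [hf, hfstar]
  obtain ⟨hdiag, hrank⟩ := stmt_11_general (fun _ => 1 / (N : ℝ)) fstar f π (fun _ => 0)
    (fun i x a hne => by rw [hf, if_neg hne]) (fun j x => by simp [hπ])
  simp only [← hM_eq, hgap, mul_one] at hdiag hrank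
  have hN_ne : N ≠ 0 := Nat.one_le_iff_ne_zero.1 hN
  exact ⟨fun i j => by rw [hdiag, diagonal_apply], by rw [hdiag, smul_one_eq_diagonal],
    by simpa [hN_ne] using hrank⟩
end

section
/- Let (Ω, μ) be a probability space and X : Ω → ℝ a measurable function with μ-almost surely |X| ≤ σ (for some σ ≥ 0) and ∫ X dμ = 0. Let e ∈ ℝ and c > 0. Then ∫ exp(c·(e² + 2·X·e)) dμ ≤ exp(c·(1 + 2·c·σ²)·e²) and ∫ exp(−c·(e² + 2·X·e)) dμ ≤ exp(−c·(1 − 2·c·σ²)·e²). -/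
open MeasureTheory

/-!
The exponent `c * (e ^ 2 + 2 * X * e)` is affine in `X`, with slope `t = 2 * c * e`, so a
sub-Gaussian bound on the moment generating function of `X` at `t` controls its exponential moment.
Since `c` may have either sign, replacing it by `-c` gives the second bound. Hoeffding's lemma makes
a mean-zero variable with values in `[-σ, σ]` sub-Gaussian with parameter `σ ^ 2`.
-/

open ProbabilityTheory
open scoped NNReal

section

variable {Ω : Type*} [MeasurableSpace Ω] {μ : Measure Ω} {X : Ω → ℝ}

lemma hasSubgaussianMGF_sq_of_abs_le_of_integral_eq_zero [IsProbabilityMeasure μ] {σ : ℝ≥0}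
    (hX : AEMeasurable X μ) (hbd : ∀ᵐ ω ∂μ, |X ω| ≤ σ) (hmean : ∫ ω, X ω ∂μ = 0) :
    HasSubgaussianMGF X (σ ^ 2) μ := by
  have hIcc : ∀ᵐ ω ∂μ, X ω ∈ Set.Icc (-(σ : ℝ)) σ := hbd.mono fun _ hω ↦ abs_le.mp hω
  have half_width : ‖(σ : ℝ) - -σ‖₊ / 2 = σ := by
    rw [sub_neg_eq_add, ← NNReal.coe_add, NNReal.nnnorm_eq, add_self_div_two]
  simpa only [half_width] using
    hasSubgaussianMGF_of_mem_Icc_of_integral_eq_zero hX hIcc hmean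

lemma integral_exp_add_mul_le_of_hasSubgaussianMGF {v : ℝ≥0} (hX : HasSubgaussianMGF X v μ)
    (a t : ℝ) :
    ∫ ω, Real.exp (a + t * X ω) ∂μ ≤ Real.exp (a + v * t ^ 2 / 2) :=
  calc
    ∫ ω, Real.exp (a + t * X ω) ∂μ = Real.exp a * mgf X μ t := by
      simp only [Real.exp_add, integral_const_mul, mgf]
    _ ≤ Real.exp a * Real.exp (v * t ^ 2 / 2) := by gcongr; exact hX.mgf_le t
    _ = Real.exp (a + v * t ^ 2 / 2) := (Real.exp_add _ _).symm

theorem stmt_12_general {v : ℝ≥0} (hX : HasSubgaussianMGF X v μ) (e c : ℝ) :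
    ∫ ω, Real.exp (c * (e ^ 2 + 2 * X ω * e)) ∂μ ≤ Real.exp (c * (1 + 2 * c * v) * e ^ 2) :=
  calc
    ∫ ω, Real.exp (c * (e ^ 2 + 2 * X ω * e)) ∂μ
        = ∫ ω, Real.exp (c * e ^ 2 + 2 * c * e * X ω) ∂μ := by
      congr! 3
      ring
    _ ≤ Real.exp (c * e ^ 2 + v * (2 * c * e) ^ 2 / 2) :=
      integral_exp_add_mul_le_of_hasSubgaussianMGF hX _ _
    _ = Real.exp (c * (1 + 2 * c * v) * e ^ 2) := by
      congr 1
      ring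

end

/-- exponential-moment bounds of Lemma H.2. -/
theorem stmt_12 {Ω : Type*} [MeasurableSpace Ω] (μ : Measure Ω)
    [IsProbabilityMeasure μ]
    (X : Ω → ℝ) (hX : Measurable X) (σ : ℝ) (hσ : 0 ≤ σ)
    (hbd : ∀ᵐ ω ∂μ, |X ω| ≤ σ) (hmean : ∫ ω, X ω ∂μ = 0)
    (e c : ℝ) (hc : 0 < c) :
    (∫ ω, Real.exp (c * (e ^ 2 + 2 * X ω * e)) ∂μ ≤
        Real.exp (c * (1 + 2 * c * σ ^ 2) * e ^ 2)) ∧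
    (∫ ω, Real.exp (-(c * (e ^ 2 + 2 * X ω * e))) ∂μ ≤
        Real.exp (-(c * (1 - 2 * c * σ ^ 2) * e ^ 2))) := by
  lift σ to ℝ≥0 using hσ
  have bound := stmt_12_general
    (hasSubgaussianMGF_sq_of_abs_le_of_integral_eq_zero hX.aemeasurable hbd hmean) e
  exact ⟨by simpa only [NNReal.coe_pow] using bound c,
    by simpa only [NNReal.coe_pow, neg_mul, mul_neg, ← sub_eq_add_neg] using bound (-c)⟩
end

section
/- Let (Ω, μ) be a probability space and X : Ω → ℝ a measurable function with μ-almost surely |X| ≤ σ (for some σ ≥ 0) and ∫ X dμ = 0. Let e ∈ ℝ with |e| ≤ 1, and define δ : Ω → ℝ by δ ω = e² + 2·(X ω)·e. Then: (i) −σ² ≤ δ ω ≤ 1 + 2σ for μ-almost every ω; (ii) ∫ δ dμ = e²; and (iii) ∫ δ² dμ ≤ (1 + 4σ²)·e². -/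
open MeasureTheory

/-! The random variable `δ = e² + 2eX` is an affine function of the noise `X`, so its mean is `e²`
and its second moment is `(∫ δ)² + Var[δ] = e⁴ + 4e² Var[X]`. Popoviciu's inequality bounds
`Var[X]` by `σ²`, and `e⁴ ≤ e²`. The lower bound on `δ` comes from completing the square:
`δ = (e + X)² - X²`. -/

open scoped ProbabilityTheory

section Pointwise

variable {R : Type*} [CommRing R] [LinearOrder R] [IsStrictOrderedRing R] {x e σ : R}

theorem neg_sq_le_sq_add_two_mul_mul (hx : |x| ≤ σ) : -σ ^ 2 ≤ e ^ 2 + 2 * x * e :=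
  calc -σ ^ 2 ≤ -x ^ 2 := neg_le_neg (sq_le_sq.2 (hx.trans (le_abs_self σ)))
    _ ≤ (e + x) ^ 2 - x ^ 2 := by linarith [sq_nonneg (e + x)]
    _ = e ^ 2 + 2 * x * e := by ring

theorem sq_add_two_mul_mul_le_one_add_two_mul (hx : |x| ≤ σ) (he : |e| ≤ 1) :
    e ^ 2 + 2 * x * e ≤ 1 + 2 * σ := by
  have he_sq : e ^ 2 ≤ 1 := (sq_le_one_iff_abs_le_one e).2 he
  have hxe : x * e ≤ σ :=
    calc x * e ≤ |x| * |e| := (le_abs_self _).trans (abs_mul x e).le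
      _ ≤ |x| := mul_le_of_le_one_right (abs_nonneg x) he
      _ ≤ σ := hx
  linarith

end Pointwise

section Moments

variable {Ω : Type*} [MeasurableSpace Ω] {μ : Measure Ω} [IsProbabilityMeasure μ] {X : Ω → ℝ}

theorem integral_const_add_const_mul (hX : Integrable X μ) (a b : ℝ) :
    ∫ ω, (a + b * X ω) ∂μ = a + b * ∫ ω, X ω ∂μ := by
  rw [integral_add (integrable_const a) (hX.const_mul b), integral_const_mul, integral_const,
    probReal_univ, one_smul]

theorem integral_sq_const_add_const_mul (hX : MemLp X 2 μ) (a b : ℝ) :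
    ∫ ω, (a + b * X ω) ^ 2 ∂μ = (a + b * ∫ ω, X ω ∂μ) ^ 2 + b ^ 2 * Var[X; μ] := by
  have hY : MemLp (fun ω => a + b * X ω) 2 μ := (memLp_const a).add (hX.const_mul b)
  have hvar : Var[fun ω => a + b * X ω; μ] = b ^ 2 * Var[X; μ] := by
    rw [ProbabilityTheory.variance_const_add (hX.const_mul b).aestronglyMeasurable,
      ProbabilityTheory.variance_const_mul]
  rw [← hvar, ProbabilityTheory.variance_eq_sub hY,
    integral_const_add_const_mul (hX.integrable one_le_two)]
  simp only [Pi.pow_apply, add_sub_cancel]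

theorem variance_le_sq_of_ae_abs_le {σ : ℝ} (hX : AEMeasurable X μ) (hbd : ∀ᵐ ω ∂μ, |X ω| ≤ σ) :
    Var[X; μ] ≤ σ ^ 2 :=
  calc Var[X; μ] ≤ ((σ - -σ) / 2) ^ 2 :=
        ProbabilityTheory.variance_le_sq_of_bounded (hbd.mono fun _ => abs_le.1) hX
    _ = σ ^ 2 := by ring

end Moments

/-- boundedness and moment identities of Lemma H.2. -/
theorem stmt_13 {Ω : Type*} [MeasurableSpace Ω] (μ : Measure Ω)
    [IsProbabilityMeasure μ]
    (X : Ω → ℝ) (hX : Measurable X) (σ : ℝ) (hσ : 0 ≤ σ)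
    (hbd : ∀ᵐ ω ∂μ, |X ω| ≤ σ) (hmean : ∫ ω, X ω ∂μ = 0)
    (e : ℝ) (he : |e| ≤ 1)
    (δ : Ω → ℝ) (hδ : ∀ ω, δ ω = e ^ 2 + 2 * X ω * e) :
    (∀ᵐ ω ∂μ, -σ ^ 2 ≤ δ ω ∧ δ ω ≤ 1 + 2 * σ) ∧
      (∫ ω, δ ω ∂μ = e ^ 2) ∧
      (∫ ω, (δ ω) ^ 2 ∂μ ≤ (1 + 4 * σ ^ 2) * e ^ 2) := by
  have hX_memLp : MemLp X 2 μ := .of_bound hX.aestronglyMeasurable σ hbd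
  have hδ_affine (ω : Ω) : δ ω = e ^ 2 + 2 * e * X ω := by rw [hδ]; ring
  refine ⟨?_, ?_, ?_⟩
  · filter_upwards [hbd] with ω hω
    rw [hδ]
    exact ⟨neg_sq_le_sq_add_two_mul_mul hω, sq_add_two_mul_mul_le_one_add_two_mul hω he⟩
  · simp only [hδ_affine]
    rw [integral_const_add_const_mul (hX_memLp.integrable one_le_two), hmean, mul_zero, add_zero]
  · have he_sq : e ^ 2 ≤ 1 := (sq_le_one_iff_abs_le_one e).2 he
    have hvar : Var[X; μ] ≤ σ ^ 2 := variance_le_sq_of_ae_abs_le hX.aemeasurable hbd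
    calc ∫ ω, δ ω ^ 2 ∂μ = (e ^ 2 + 4 * Var[X; μ]) * e ^ 2 := by
          simp only [hδ_affine]
          rw [integral_sq_const_add_const_mul hX_memLp, hmean]
          ring
      _ ≤ (1 + 4 * σ ^ 2) * e ^ 2 := by gcongr
end

section
/- Define ψ : ℝ → ℝ by ψ z = (exp z − z − 1)/z² for z ≠ 0 and ψ 0 = 1/2. Let (Ω, μ) be a probability space, B ≥ 0, γ > 0, and D : Ω → ℝ a measurable function with |D| ≤ B μ-almost surely. Then ∫ D dμ − γ·ψ(γ·B)·∫ D² dμ ≤ −(1/γ)·log(∫ exp(−γ·D) dμ) ≤ ∫ D dμ. -/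
open MeasureTheory

/-- ψ(z) = (e^z − z − 1)/z², extended by its limit 1/2 at z = 0. -/
noncomputable def psi (z : ℝ) : ℝ :=
  if z = 0 then 1 / 2 else (Real.exp z - z - 1) / z ^ 2

/-!
The upper bound is Jensen's inequality for `exp`. For the lower bound, Taylor's formula with
integral remainder reads `exp z = 1 + z + ψ(z) z²` with `ψ(z) = ∫₀¹ (1 - t) exp (t z) dt`, which is
visibly increasing in `z`. Hence `exp X ≤ 1 + X + ψ(b) X²` wherever `X ≤ b`; integrate this for
`X = -γ D` and `b = γ B`, and use `log Z ≤ Z - 1`.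
-/

lemma psi_mul_sq (z : ℝ) : psi z * z ^ 2 = Real.exp z - z - 1 := by
  rcases eq_or_ne z 0 with rfl | hz
  · simp
  · rw [psi, if_neg hz, div_mul_cancel₀ _ (pow_ne_zero 2 hz)]

lemma integral_one_sub_mul_exp_mul_sq (z : ℝ) :
    (∫ t in (0 : ℝ)..1, (1 - t) * Real.exp (t * z)) * z ^ 2 = Real.exp z - z - 1 := by
  have hderiv (t : ℝ) : HasDerivAt (fun t => ((1 - t) * z + 1) * Real.exp (t * z))
      ((1 - t) * Real.exp (t * z) * z ^ 2) t := by
    have hlin : HasDerivAt (fun t => (1 - t) * z + 1) (-1 * z) t :=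
      (((hasDerivAt_id t).const_sub 1).mul_const z).add_const 1
    have hexp : HasDerivAt (fun t => Real.exp (t * z)) (Real.exp (t * z) * z) t := by
      simpa only [id, one_mul] using ((hasDerivAt_id t).mul_const z).exp
    exact (hlin.mul hexp).congr_deriv (by ring)
  have hcont : Continuous fun t : ℝ => (1 - t) * Real.exp (t * z) * z ^ 2 := by fun_prop
  rw [← intervalIntegral.integral_mul_const,
    intervalIntegral.integral_eq_sub_of_hasDerivAt (fun t _ => hderiv t)
      (hcont.intervalIntegrable 0 1)]
  simp only [sub_self, zero_mul, zero_add, one_mul, sub_zero, Real.exp_zero, mul_one]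
  ring

lemma psi_eq_integral (z : ℝ) : psi z = ∫ t in (0 : ℝ)..1, (1 - t) * Real.exp (t * z) := by
  rcases eq_or_ne z 0 with rfl | hz
  · have hhalf : ∫ t in (0 : ℝ)..1, (1 - t) = 1 / 2 := by
      rw [intervalIntegral.integral_comp_sub_left (fun t => t), integral_id]
      norm_num
    simpa [psi] using hhalf.symm
  · exact mul_right_cancel₀ (pow_ne_zero 2 hz)
      ((psi_mul_sq z).trans (integral_one_sub_mul_exp_mul_sq z).symm)

lemma monotone_psi : Monotone psi := by
  intro z b hzb
  have hint (x : ℝ) :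
      IntervalIntegrable (fun t : ℝ => (1 - t) * Real.exp (t * x)) volume 0 1 :=
    Continuous.intervalIntegrable (by fun_prop) 0 1
  rw [psi_eq_integral, psi_eq_integral]
  refine intervalIntegral.integral_mono_on zero_le_one (hint z) (hint b) fun t ht => ?_
  have h0t : 0 ≤ t := ht.1
  have h1t : 0 ≤ 1 - t := sub_nonneg.2 ht.2
  gcongr

lemma exp_le_one_add_add_psi_mul_sq {z b : ℝ} (h : z ≤ b) :
    Real.exp z ≤ 1 + z + psi b * z ^ 2 := by
  calc Real.exp z = 1 + z + psi z * z ^ 2 := by rw [psi_mul_sq]; ring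
    _ ≤ 1 + z + psi b * z ^ 2 := by gcongr; exact monotone_psi h

section

variable {Ω : Type*} [MeasurableSpace Ω] {μ : Measure Ω} {X : Ω → ℝ} {b : ℝ}

lemma integrable_exp_of_ae_le [IsFiniteMeasure μ] (hX : AEMeasurable X μ)
    (hb : ∀ᵐ ω ∂μ, X ω ≤ b) : Integrable (fun ω => Real.exp (X ω)) μ := by
  simpa only [one_mul] using ProbabilityTheory.integrable_exp_mul_of_le 1 b zero_le_one hX hb

lemma integral_le_log_integral_exp [IsProbabilityMeasure μ] (hX : Integrable X μ)
    (hexp : Integrable (fun ω => Real.exp (X ω)) μ) :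
    ∫ ω, X ω ∂μ ≤ Real.log (∫ ω, Real.exp (X ω) ∂μ) :=
  (Real.le_log_iff_exp_le (integral_exp_pos hexp)).2 <|
    convexOn_exp.map_integral_le Real.continuous_exp.continuousOn isClosed_univ
      (Filter.Eventually.of_forall fun _ => Set.mem_univ _) hX hexp

lemma integral_exp_le_of_ae_le [IsFiniteMeasure μ] (hX : MemLp X 2 μ)
    (hb : ∀ᵐ ω ∂μ, X ω ≤ b) :
    ∫ ω, Real.exp (X ω) ∂μ ≤ μ.real Set.univ + ∫ ω, X ω ∂μ + psi b * ∫ ω, X ω ^ 2 ∂μ := by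
  have hlin : Integrable (fun ω => 1 + X ω) μ :=
    (integrable_const 1).add (hX.integrable one_le_two)
  have hsq : Integrable (fun ω => psi b * X ω ^ 2) μ := hX.integrable_sq.const_mul _
  calc ∫ ω, Real.exp (X ω) ∂μ ≤ ∫ ω, (1 + X ω + psi b * X ω ^ 2) ∂μ :=
        integral_mono_ae (integrable_exp_of_ae_le hX.aemeasurable hb) (hlin.add hsq)
          (hb.mono fun _ h => exp_le_one_add_add_psi_mul_sq h)
    _ = μ.real Set.univ + ∫ ω, X ω ∂μ + psi b * ∫ ω, X ω ^ 2 ∂μ := by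
        rw [integral_add hlin hsq, integral_add (integrable_const 1) (hX.integrable one_le_two),
          integral_const_mul, integral_const, smul_eq_mul, mul_one]

lemma log_integral_exp_le_of_ae_le [IsProbabilityMeasure μ] (hX : MemLp X 2 μ)
    (hb : ∀ᵐ ω ∂μ, X ω ≤ b) :
    Real.log (∫ ω, Real.exp (X ω) ∂μ) ≤ ∫ ω, X ω ∂μ + psi b * ∫ ω, X ω ^ 2 ∂μ := by
  have hpos := integral_exp_pos (integrable_exp_of_ae_le hX.aemeasurable hb)
  have hlog := Real.log_le_sub_one_of_pos hpos
  have hexp := integral_exp_le_of_ae_le hX hb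
  rw [probReal_univ] at hexp
  linarith

end

theorem stmt_14_general {Ω : Type*} [MeasurableSpace Ω] (μ : Measure Ω)
    [IsProbabilityMeasure μ] (B : ℝ) (γ : ℝ) (hγ : 0 < γ)
    (D : Ω → ℝ) (hD : MemLp D 2 μ) (hbd : ∀ᵐ ω ∂μ, -B ≤ D ω) :
    ((∫ ω, D ω ∂μ) - γ * psi (γ * B) * ∫ ω, (D ω) ^ 2 ∂μ ≤
        -(1 / γ) * Real.log (∫ ω, Real.exp (-(γ * D ω)) ∂μ)) ∧
      (-(1 / γ) * Real.log (∫ ω, Real.exp (-(γ * D ω)) ∂μ) ≤ ∫ ω, D ω ∂μ) := by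
  have hX : MemLp (fun ω => -(γ * D ω)) 2 μ := (hD.const_mul γ).neg
  have hb : ∀ᵐ ω ∂μ, -(γ * D ω) ≤ γ * B := by
    filter_upwards [hbd] with ω h
    rw [← mul_neg]
    gcongr
    exact neg_le.1 h
  have hlower := integral_le_log_integral_exp (hX.integrable one_le_two)
    (integrable_exp_of_ae_le hX.aemeasurable hb)
  have hupper := log_integral_exp_le_of_ae_le hX hb
  simp only [neg_sq, mul_pow, integral_neg, integral_const_mul] at hlower hupper
  rw [neg_mul, one_div_mul_eq_div, ← neg_div, le_div_iff₀ hγ, div_le_iff₀ hγ]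
  constructor <;> linarith

/-- sandwich for the soft-min (log-partition) functional (Lemma H.4). -/
theorem stmt_14 {Ω : Type*} [MeasurableSpace Ω] (μ : Measure Ω)
    [IsProbabilityMeasure μ]
    (B : ℝ) (hB : 0 ≤ B) (γ : ℝ) (hγ : 0 < γ)
    (D : Ω → ℝ) (hD : Measurable D) (hbd : ∀ᵐ ω ∂μ, |D ω| ≤ B) :
    ((∫ ω, D ω ∂μ) - γ * psi (γ * B) * ∫ ω, (D ω) ^ 2 ∂μ ≤
        -(1 / γ) * Real.log (∫ ω, Real.exp (-(γ * D ω)) ∂μ)) ∧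
      (-(1 / γ) * Real.log (∫ ω, Real.exp (-(γ * D ω)) ∂μ) ≤ ∫ ω, D ω ∂μ) :=
  stmt_14_general μ B γ hγ D (.of_bound hD.aestronglyMeasurable B hbd)
    (hbd.mono fun _ h => (abs_le.1 h).1)
end

section
/- Let (Ω, μ) be a probability space, B ≥ 0, and Z : Ω → ℝ a measurable function with 0 ≤ Z ≤ B μ-almost surely. Then log(∫ exp(−Z) dμ) ≤ −exp(−B)·∫ Z dμ and log(∫ exp(Z) dμ) ≤ exp(B)·∫ Z dμ. -/
/-!
For `0 ≤ x ≤ b` and any real `t`, `exp (t * x) - 1 ≤ (t * x) * exp (t * x) ≤ x * (t * exp (t * b))`.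
Integrating this and using `log m ≤ m - 1` bounds the cumulant generating function at `t` by
`t * exp (t * b)` times the mean; the two inequalities are the cases `t = -1` and `t = 1`.
-/

open MeasureTheory
open ProbabilityTheory

lemma exp_sub_one_le_mul_exp (x : ℝ) : Real.exp x - 1 ≤ x * Real.exp x := by
  have h : (1 - x) * Real.exp x ≤ Real.exp (-x) * Real.exp x :=
    mul_le_mul_of_nonneg_right (Real.one_sub_le_exp_neg x) (Real.exp_pos x).le
  rw [← Real.exp_add, neg_add_cancel, Real.exp_zero] at h
  linarith

lemma monotone_mul_exp_mul (t : ℝ) : Monotone fun x : ℝ ↦ t * Real.exp (t * x) := by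
  intro x y hxy
  rcases le_total 0 t with ht | ht
  · exact mul_le_mul_of_nonneg_left
      (Real.exp_le_exp.2 (mul_le_mul_of_nonneg_left hxy ht)) ht
  · exact mul_le_mul_of_nonpos_left
      (Real.exp_le_exp.2 (mul_le_mul_of_nonpos_left hxy ht)) ht

lemma exp_mul_le_one_add_of_mem_Icc {x b : ℝ} (t : ℝ) (hx : x ∈ Set.Icc 0 b) :
    Real.exp (t * x) ≤ 1 + t * Real.exp (t * b) * x := by
  have h_mono : t * Real.exp (t * x) * x ≤ t * Real.exp (t * b) * x :=
    mul_le_mul_of_nonneg_right (monotone_mul_exp_mul t hx.2) hx.1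
  linarith [exp_sub_one_le_mul_exp (t * x)]

section

variable {Ω : Type*} [MeasurableSpace Ω] {μ : Measure Ω} {X : Ω → ℝ} {b : ℝ}

lemma mgf_le_of_mem_Icc_zero [IsFiniteMeasure μ] (hX : AEMeasurable X μ)
    (hXb : ∀ᵐ ω ∂μ, X ω ∈ Set.Icc 0 b) (t : ℝ) :
    mgf X μ t ≤ μ.real Set.univ + t * Real.exp (t * b) * ∫ ω, X ω ∂μ := by
  have hX_int : Integrable (fun ω ↦ t * Real.exp (t * b) * X ω) μ :=
    (Integrable.of_mem_Icc 0 b hX hXb).const_mul _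
  calc mgf X μ t
      ≤ ∫ ω, (1 + t * Real.exp (t * b) * X ω) ∂μ :=
        integral_mono_ae (integrable_exp_mul_of_mem_Icc hX hXb)
          ((integrable_const 1).add hX_int)
          (hXb.mono fun _ hω ↦ exp_mul_le_one_add_of_mem_Icc t hω)
    _ = μ.real Set.univ + t * Real.exp (t * b) * ∫ ω, X ω ∂μ := by
        rw [integral_add (integrable_const 1) hX_int, integral_const_mul, integral_const,
          smul_eq_mul, mul_one]

lemma cgf_le_of_mem_Icc_zero [IsProbabilityMeasure μ] (hX : AEMeasurable X μ)
    (hXb : ∀ᵐ ω ∂μ, X ω ∈ Set.Icc 0 b) (t : ℝ) :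
    cgf X μ t ≤ t * Real.exp (t * b) * ∫ ω, X ω ∂μ := by
  have h_log : cgf X μ t ≤ mgf X μ t - 1 :=
    Real.log_le_sub_one_of_pos (mgf_pos (integrable_exp_mul_of_mem_Icc hX hXb))
  have h_mgf := mgf_le_of_mem_Icc_zero hX hXb t
  rw [probReal_univ] at h_mgf
  linarith

end

/-- log-MGF linearization inequalities (Proposition 6.2's key steps). -/
theorem stmt_16 {Ω : Type*} [MeasurableSpace Ω] (μ : Measure Ω)
    [IsProbabilityMeasure μ]
    (B : ℝ) (hB : 0 ≤ B) (Z : Ω → ℝ) (hZ : Measurable Z)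
    (hbd : ∀ᵐ ω ∂μ, 0 ≤ Z ω ∧ Z ω ≤ B) :
    Real.log (∫ ω, Real.exp (-(Z ω)) ∂μ) ≤ -Real.exp (-B) * ∫ ω, Z ω ∂μ ∧
      Real.log (∫ ω, Real.exp (Z ω) ∂μ) ≤ Real.exp B * ∫ ω, Z ω ∂μ := by
  have h_cgf : ∀ t, cgf Z μ t ≤ t * Real.exp (t * B) * ∫ ω, Z ω ∂μ :=
    cgf_le_of_mem_Icc_zero hZ.aemeasurable hbd
  constructor
  · simpa only [cgf, mgf, neg_one_mul] using h_cgf (-1)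
  · simpa only [cgf, mgf, one_mul] using h_cgf 1
end
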